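/- Let φ_(k) and φ_(k') be intermittent shear profiles built from a smooth φ: ℝ → ℝ supported in [−1,1], with the same parameters r ∈ (0,1), λ ≥ r^{−1} with rλ ∈ ℕ, and integer N ≥ 1, associated to two non-parallel unit vectors k, k' with Nk, Nk' ∈ ℤ³. Then there exists a constant C, depending only on N, k and k' (and fixed geometric quantities), such that the Lebesgue measure of the support of the product satisfies |{x ∈ [−π,π]³ : φ_(k)(x) φ_(k')(x) ≠ 0}| ≤ C r². -/

import Mathlib

/-!
STATEMENT 9: Support estimate for the product of two intermittent shear profiles with
non-parallel directions: |{x ∈ [−π,π]³ : φ_(k)(x) φ_(k')(x) ≠ 0}| ≤ C r²,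
with C = C(N, k, k') independent of φ, r, λ.
-/

noncomputable section

open MeasureTheory Real
open scoped ENNReal

/-- The fundamental domain [−π,π]³ of the torus T³. -/
def dom : Set (Fin 3 → ℝ) := Set.Icc (fun _ => -π) (fun _ => π)

/-- The 2π-periodization of the rescaled profile r^{−1/2} φ(·/r). -/
def periodize (r : ℝ) (φ : ℝ → ℝ) (y : ℝ) : ℝ :=
  ∑' n : ℤ, (Real.sqrt r)⁻¹ * φ ((y + 2 * π * (n : ℝ)) / r)

/-- The intermittent shear profile φ_(k)(x) = φ_r(λ r N k·x). -/
def shear (φ : ℝ → ℝ) (r lam : ℝ) (N : ℕ) (k : Fin 3 → ℝ) (x : Fin 3 → ℝ) : ℝ :=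
  periodize r φ (lam * r * (N : ℝ) * ∑ i, k i * x i)

/-!
Where the product is nonzero, both phases `M k·x` and `M k'·x`, `M = λ r N ≥ 1`, lie within `r` of
`2πℤ`. Since `k` and `k'` are linearly independent, `x ↦ (k·x, k'·x)` is onto `ℝ²`; completing it to
an isomorphism `(L, P) : ℝ³ ≃ ℝ² × ker L` shows that the part of a bounded set `S` lying over a
planar set `A` has measure at most a constant times `|A|`, because the kernel component only ranges
over the bounded set `P(S)`. Here `A` is a product of two sets of points `t` in a bounded interval
with `M t` within `r` of `2πℤ`, and each has length `O(r)` uniformly in `M ≥ 1`: there are `O(M)`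
periods, each contributing at most `2r / M`.
-/

open Set Bornology Module

open scoped NNReal

section PeriodicBall

variable {T : ℝ} [hT : Fact (0 < T)]

theorem volume_Ioc_add_period_inter_norm_addCircle_le (a r : ℝ) :
    volume (Ioc a (a + T) ∩ {t : ℝ | ‖(t : AddCircle T)‖ ≤ r}) ≤ ENNReal.ofReal (2 * r) :=
  calc volume (Ioc a (a + T) ∩ {t : ℝ | ‖(t : AddCircle T)‖ ≤ r})
      = volume (Metric.closedBall (0 : AddCircle T) r) := by
        rw [AddCircle.add_projection_respects_measure T a measurableSet_closedBall, inter_comm]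
        congr! 2
        ext t
        exact mem_closedBall_zero_iff.symm
    _ = ENNReal.ofReal (min T (2 * r)) := AddCircle.volume_closedBall T r
    _ ≤ ENNReal.ofReal (2 * r) := ENNReal.ofReal_le_ofReal (min_le_right _ _)

theorem volume_Ioc_add_natCast_mul_period_inter_norm_addCircle_le (a r : ℝ) (n : ℕ) :
    volume (Ioc a (a + n * T) ∩ {t : ℝ | ‖(t : AddCircle T)‖ ≤ r}) ≤
      n * ENNReal.ofReal (2 * r) := by
  induction n with
  | zero => simp
  | succ n ih =>
    set U : Set ℝ := {t : ℝ | ‖(t : AddCircle T)‖ ≤ r}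
    have split : Ioc a (a + (n + 1 : ℕ) * T) ⊆
        Ioc a (a + n * T) ∪ Ioc (a + n * T) (a + n * T + T) := by
      rw [Nat.cast_succ, add_one_mul, ← add_assoc]
      exact Ioc_subset_Ioc_union_Ioc
    calc volume (Ioc a (a + (n + 1 : ℕ) * T) ∩ U)
        ≤ volume (Ioc a (a + n * T) ∩ U) + volume (Ioc (a + n * T) (a + n * T + T) ∩ U) := by
          refine (measure_mono (inter_subset_inter_left U split)).trans ?_
          rw [union_inter_distrib_right]
          exact measure_union_le _ _
      _ ≤ n * ENNReal.ofReal (2 * r) + ENNReal.ofReal (2 * r) :=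
          add_le_add ih (volume_Ioc_add_period_inter_norm_addCircle_le _ r)
      _ = (n + 1 : ℕ) * ENNReal.ofReal (2 * r) := by push_cast; ring

theorem volume_Ioc_inter_norm_addCircle_mul_le {a b M : ℝ} (hab : a ≤ b) (hM : 1 ≤ M) (r : ℝ) :
    volume (Ioc a b ∩ {t : ℝ | ‖((M * t : ℝ) : AddCircle T)‖ ≤ r}) ≤
      ENNReal.ofReal (2 * ((b - a) / T + 1)) * ENNReal.ofReal r := by
  have hM0 : 0 < M := one_pos.trans_le hM
  have hT0 : 0 < T := hT.out
  set n := ⌈M * (b - a) / T⌉₊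
  have hn_ge : M * (b - a) ≤ n * T := (div_le_iff₀ hT0).1 (Nat.le_ceil _)
  have hn_le : M⁻¹ * n ≤ (b - a) / T + 1 := by
    have hceil : (n : ℝ) ≤ M * (b - a) / T + 1 :=
      (Nat.ceil_lt_add_one (by have := sub_nonneg.2 hab; positivity)).le
    calc M⁻¹ * n ≤ M⁻¹ * (M * (b - a) / T + 1) := by gcongr
      _ = (b - a) / T + M⁻¹ := by field_simp
      _ ≤ (b - a) / T + 1 := by gcongr; exact inv_le_one_of_one_le₀ hM
  have dilate : Ioc a b ∩ {t : ℝ | ‖((M * t : ℝ) : AddCircle T)‖ ≤ r} ⊆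
      (M * ·) ⁻¹' (Ioc (M * a) (M * a + n * T) ∩ {s : ℝ | ‖(s : AddCircle T)‖ ≤ r}) :=
    fun t ⟨⟨hat, htb⟩, ht⟩ ↦
      ⟨⟨mul_lt_mul_of_pos_left hat hM0, by linarith [mul_le_mul_of_nonneg_left htb hM0.le]⟩, ht⟩
  calc volume (Ioc a b ∩ {t : ℝ | ‖((M * t : ℝ) : AddCircle T)‖ ≤ r})
      ≤ ENNReal.ofReal |M⁻¹| *
          volume (Ioc (M * a) (M * a + n * T) ∩ {s : ℝ | ‖(s : AddCircle T)‖ ≤ r}) := by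
        rw [← Real.volume_preimage_mul_left hM0.ne']
        exact measure_mono dilate
    _ ≤ ENNReal.ofReal |M⁻¹| * (n * ENNReal.ofReal (2 * r)) := by
        gcongr
        exact volume_Ioc_add_natCast_mul_period_inter_norm_addCircle_le _ r n
    _ = ENNReal.ofReal (2 * (M⁻¹ * n)) * ENNReal.ofReal r := by
        rw [abs_of_pos (inv_pos.2 hM0), ENNReal.ofReal_mul zero_le_two,
          ENNReal.ofReal_mul zero_le_two, ENNReal.ofReal_mul (inv_pos.2 hM0).le,
          ENNReal.ofReal_natCast]
        ring
    _ ≤ ENNReal.ofReal (2 * ((b - a) / T + 1)) * ENNReal.ofReal r := by gcongr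

theorem exists_volume_inter_norm_addCircle_mul_le {S : Set ℝ} (hS : IsBounded S) :
    ∃ C : ℝ≥0, ∀ M r : ℝ, 1 ≤ M →
      volume (S ∩ {t : ℝ | ‖((M * t : ℝ) : AddCircle T)‖ ≤ r}) ≤ C * ENNReal.ofReal r := by
  obtain ⟨R, hR, hSR⟩ := hS.subset_ball_lt 0 0
  have hSI : S ⊆ Ioc (-R) R := by
    rw [Real.ball_eq_Ioo, zero_sub, zero_add] at hSR
    exact hSR.trans Ioo_subset_Ioc_self
  exact ⟨(2 * ((R - -R) / T + 1)).toNNReal, fun M r hM ↦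
    (measure_mono (inter_subset_inter_left _ hSI)).trans
      (volume_Ioc_inter_norm_addCircle_mul_le (by linarith) hM r)⟩

end PeriodicBall

section LinearPreimage

variable {E : Type*} [NormedAddCommGroup E] [NormedSpace ℝ E] [FiniteDimensional ℝ E]
  [MeasurableSpace E] [BorelSpace E] (μ : Measure E) [μ.IsAddHaarMeasure]

theorem exists_addHaar_inter_preimage_le {F : Type*} [NormedAddCommGroup F] [NormedSpace ℝ F]
    [MeasurableSpace F] [BorelSpace F] (ν : Measure F) [ν.IsAddHaarMeasure]
    {L : E →ₗ[ℝ] F} (hL : Function.Surjective L) {S : Set E} (hS : IsBounded S) :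
    ∃ C : ℝ≥0, ∀ A : Set F, μ (S ∩ L ⁻¹' A) ≤ C * ν A := by
  have : FiniteDimensional ℝ F := Module.Finite.of_surjective L hL
  let K := LinearMap.ker L
  obtain ⟨P, hP⟩ := K.subtype.exists_leftInverse_of_injective K.ker_subtype
  have hP_id : ∀ x : K, P x = x := LinearMap.congr_fun hP
  let e : E ≃L[ℝ] F × K := (LinearMap.equivProdOfSurjectiveOfIsCompl L P
    (LinearMap.range_eq_top.2 hL) (LinearMap.range_eq_top.2 fun x ↦ ⟨x, hP_id x⟩)
    (LinearMap.isCompl_of_proj hP_id)).toContinuousLinearEquiv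
  let κ : Measure K := Measure.addHaar
  have hPS : κ (P '' S) < ⊤ :=
    ((LinearMap.toContinuousLinearMap P).lipschitz.isBounded_image hS).measure_lt_top
  let c := Measure.addHaarScalarFactor (μ.map e) (ν.prod κ)
  refine ⟨c * (κ (P '' S)).toNNReal, fun A ↦ ?_⟩
  calc μ (S ∩ L ⁻¹' A)
      ≤ μ (e ⁻¹' (A ×ˢ (P '' S))) :=
        measure_mono fun x ⟨hxS, hxA⟩ ↦ ⟨hxA, mem_image_of_mem P hxS⟩
    _ = μ.map e (A ×ˢ (P '' S)) := (e.toHomeomorph.toMeasurableEquiv.map_apply _).symm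
    _ = c * (ν A * κ (P '' S)) := by
        rw [Measure.isAddLeftInvariant_eq_smul (μ.map e) (ν.prod κ), Measure.smul_apply,
          Measure.prod_prod, ENNReal.smul_def, smul_eq_mul]
    _ = (c * (κ (P '' S)).toNNReal : ℝ≥0) * ν A := by
        rw [ENNReal.coe_mul, ENNReal.coe_toNNReal hPS.ne]
        ring

theorem exists_addHaar_inter_forall_norm_addCircle_mul_le {ι : Type*} [Fintype ι]
    (T : ℝ) [Fact (0 < T)] {L : E →ₗ[ℝ] ι → ℝ} (hL : Function.Surjective L)
    {S : Set E} (hS : IsBounded S) :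
    ∃ C : ℝ≥0, ∀ M r : ℝ, 1 ≤ M →
      μ (S ∩ {x | ∀ i, ‖((M * L x i : ℝ) : AddCircle T)‖ ≤ r}) ≤
        C * ENNReal.ofReal r ^ Fintype.card ι := by
  have hLS : IsBounded (L '' S) :=
    (LinearMap.toContinuousLinearMap L).lipschitz.isBounded_image hS
  obtain ⟨c, hc⟩ := exists_addHaar_inter_preimage_le μ (volume : Measure (ι → ℝ)) hL hS
  choose B hB using fun i ↦
    exists_volume_inter_norm_addCircle_mul_le (T := T) (hLS.image_eval i)
  refine ⟨c * ∏ i, B i, fun M r hM ↦ ?_⟩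
  let A : ι → Set ℝ := fun i ↦
    Function.eval i '' (L '' S) ∩ {t | ‖((M * t : ℝ) : AddCircle T)‖ ≤ r}
  calc μ (S ∩ {x | ∀ i, ‖((M * L x i : ℝ) : AddCircle T)‖ ≤ r})
      ≤ μ (S ∩ L ⁻¹' univ.pi A) :=
        measure_mono fun x ⟨hxS, hx⟩ ↦
          ⟨hxS, fun i _ ↦ ⟨mem_image_of_mem _ (mem_image_of_mem L hxS), hx i⟩⟩
    _ ≤ c * ∏ i, volume (A i) := (hc _).trans_eq (by rw [volume_pi_pi])
    _ ≤ c * ∏ i, (B i * ENNReal.ofReal r) := by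
        gcongr with i
        exact hB i M r hM
    _ = (c * ∏ i, B i : ℝ≥0) * ENNReal.ofReal r ^ Fintype.card ι := by
        rw [Finset.prod_mul_distrib, Finset.prod_const, Finset.card_univ, ENNReal.coe_mul,
          ENNReal.ofNNReal_finsetProd, mul_assoc]

end LinearPreimage

theorem mulVecLin_surjective_of_linearIndependent_row {m n K : Type*} [Finite m] [Fintype n]
    [Field K] {A : Matrix m n K} (hA : LinearIndependent K A.row) :
    Function.Surjective A.mulVecLin := by
  cases nonempty_fintype m
  refine LinearMap.range_eq_top.1 (Submodule.eq_top_of_finrank_eq ?_)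
  rw [finrank_fintype_fun_eq_card, ← hA.rank_matrix, Matrix.rank]

theorem norm_addCircle_le_of_periodize_ne_zero {r : ℝ} (hr : 0 < r) {φ : ℝ → ℝ}
    (hφ : Function.support φ ⊆ Icc (-1) 1) {y : ℝ} (hy : periodize r φ y ≠ 0) :
    ‖(y : AddCircle (2 * π))‖ ≤ r := by
  obtain ⟨n, hn⟩ : ∃ n : ℤ, (√r)⁻¹ * φ ((y + 2 * π * n) / r) ≠ 0 := by
    contrapose! hy
    simp only [periodize, hy, tsum_zero]
  have hyn : |y + 2 * π * n| ≤ r := by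
    have := abs_le.2 (hφ (right_ne_zero_of_mul hn))
    rwa [abs_div, abs_of_pos hr, div_le_one hr] at this
  calc ‖(y : AddCircle (2 * π))‖ = ‖((y + 2 * π * n : ℝ) : AddCircle (2 * π))‖ := by
        rw [mul_comm _ (n : ℝ), ← zsmul_eq_mul, AddCircle.coe_add, AddCircle.coe_zsmul,
          AddCircle.coe_period, smul_zero, add_zero]
    _ ≤ |y + 2 * π * n| := QuotientAddGroup.norm_mk_le_norm
    _ ≤ r := hyn

theorem shear_product_support_estimate_general {k k' : Fin 3 → ℝ}
    (hkk' : LinearIndependent ℝ ![k, k']) :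
    ∃ C : ℝ, 0 < C ∧
      ∀ φ : ℝ → ℝ, Function.support φ ⊆ Icc (-1 : ℝ) 1 →
      ∀ (N : ℕ) (r lam : ℝ), 1 ≤ N → 0 < r → r⁻¹ ≤ lam →
        volume {x | x ∈ dom ∧ shear φ r lam N k x * shear φ r lam N k' x ≠ 0}
          ≤ ENNReal.ofReal (C * r ^ 2) := by
  have : Fact (0 < 2 * π) := ⟨two_pi_pos⟩
  let L : (Fin 3 → ℝ) →ₗ[ℝ] Fin 2 → ℝ := (Matrix.of ![k, k']).mulVecLin
  have hL : Function.Surjective L := mulVecLin_surjective_of_linearIndependent_row hkk'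
  obtain ⟨C, hC⟩ := exists_addHaar_inter_forall_norm_addCircle_mul_le volume (2 * π) hL
    (S := dom) (Metric.isBounded_Icc _ _)
  refine ⟨C + 1, by positivity, fun φ hφ N r lam hN hr hlam ↦ ?_⟩
  have hM : 1 ≤ lam * r * N :=
    one_le_mul_of_one_le_of_one_le ((inv_le_iff_one_le_mul₀ hr).1 hlam) (Nat.one_le_cast.2 hN)
  calc volume {x | x ∈ dom ∧ shear φ r lam N k x * shear φ r lam N k' x ≠ 0}
      ≤ volume (dom ∩ {x | ∀ i, ‖((lam * r * N * L x i : ℝ) : AddCircle (2 * π))‖ ≤ r}) :=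
        measure_mono fun x ⟨hx, hne⟩ ↦ ⟨hx, Fin.forall_fin_two.2
          ⟨norm_addCircle_le_of_periodize_ne_zero hr hφ (left_ne_zero_of_mul hne),
            norm_addCircle_le_of_periodize_ne_zero hr hφ (right_ne_zero_of_mul hne)⟩⟩
    _ ≤ C * ENNReal.ofReal r ^ 2 := hC _ r hM
    _ = ENNReal.ofReal (C * r ^ 2) := by
        rw [ENNReal.ofReal_mul C.coe_nonneg, ENNReal.ofReal_coe_nnreal, ENNReal.ofReal_pow hr.le]
    _ ≤ ENNReal.ofReal ((C + 1) * r ^ 2) := by gcongr; linarith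

theorem shear_product_support_estimate
    (N : ℕ) (hN : 1 ≤ N)
    (k k' : Fin 3 → ℝ) (hk : ∑ i, k i ^ 2 = 1) (hk' : ∑ i, k' i ^ 2 = 1)
    (hkZ : ∀ i, ∃ z : ℤ, (N : ℝ) * k i = (z : ℝ))
    (hk'Z : ∀ i, ∃ z : ℤ, (N : ℝ) * k' i = (z : ℝ))
    (hnonpar : ∀ c : ℝ, k' ≠ c • k) :
    ∃ C : ℝ, 0 < C ∧
      ∀ (φ : ℝ → ℝ), ContDiff ℝ (⊤ : ℕ∞) φ → Function.support φ ⊆ Set.Icc (-1 : ℝ) 1 →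
      ∀ r lam : ℝ, 0 < r → r < 1 → r⁻¹ ≤ lam → (∃ m : ℕ, r * lam = (m : ℝ)) →
        volume {x | x ∈ dom ∧ shear φ r lam N k x * shear φ r lam N k' x ≠ 0}
          ≤ ENNReal.ofReal (C * r ^ 2) := by
  have hk0 : k ≠ 0 := by rintro rfl; simp at hk
  obtain ⟨C, hC, hvol⟩ := shear_product_support_estimate_general
    ((LinearIndependent.pair_iff' hk0).2 fun c hc ↦ hnonpar c hc.symm)
  exact ⟨C, hC, fun φ _ hφ r lam hr _ hlam _ ↦ hvol φ hφ N r lam hN hr hlam⟩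

end
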